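/- Every B-diagram G with |G| = n ≥ 1 can be written as a composition over a one-vertex B-diagram: there exist a B-diagram V = (1, [p], E_v↑, E_v↓, ∅) with one vertex, a B-diagram G̃ with |G̃| = n − 1, an integer k ≥ 0, a strictly increasing sequence a₁ < ⋯ < a_k of elements of H_f↑(V) and pairwise distinct elements b₁,…,b_k of H_f↓(G̃), such that G equals the composition of G̃ over V along (a₁,…,a_k; b₁,…,b_k). -/

import Mathlib

open scoped BigOperators

structure BD where
  lam : List ℕ
  up : Finset ℕ
  dn : Finset ℕ
  ed : Finset (ℕ × ℕ)
deriving DecidableEq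

namespace BD

/-- number of vertices -/
def nv (G : BD) : ℕ := G.lam.length

/-- number of half-edges -/
def omega (G : BD) : ℕ := G.lam.sum

/-- the vertex to which a half-edge belongs -/
def v (G : BD) (k : ℕ) : ℕ :=
  (List.range G.lam.length).countP (fun i => (G.lam.take i).sum < k)

def Valid (G : BD) : Prop :=
  (∀ x ∈ G.lam, 0 < x) ∧
  G.up ⊆ Finset.Icc 1 G.omega ∧
  G.dn ⊆ Finset.Icc 1 G.omega ∧
  (∀ p ∈ G.ed, p.1 ∈ G.up ∧ p.2 ∈ G.dn ∧ G.v p.1 < G.v p.2) ∧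
  (∀ p ∈ G.ed, ∀ q ∈ G.ed, p.1 = q.1 → p = q) ∧
  (∀ p ∈ G.ed, ∀ q ∈ G.ed, p.2 = q.2 → p = q)

def eps : BD := ⟨[], ∅, ∅, ∅⟩

theorem eps_valid : eps.Valid := by
  refine ⟨?_, ?_, ?_, ?_, ?_, ?_⟩ <;> simp [eps, Valid, omega]

def HfUp (G : BD) : Finset ℕ := G.up \ G.ed.image Prod.fst
def HfDn (G : BD) : Finset ℕ := G.dn \ G.ed.image Prod.snd
def hfUp (G : BD) : ℕ := G.HfUp.card
def hfDn (G : BD) : ℕ := G.HfDn.card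
def hc (G : BD) : ℕ :=
  (G.omega - G.ed.card - G.hfUp) + (G.omega - G.ed.card - G.hfDn)

/-- composition of `G'` over `G` along a matching `s` -/
def comp (G G' : BD) (s : Finset (ℕ × ℕ)) : BD where
  lam := G.lam ++ G'.lam
  up := G.up ∪ G'.up.image (· + G.omega)
  dn := G.dn ∪ G'.dn.image (· + G.omega)
  ed := G.ed ∪ s.image (fun p => (p.1, p.2 + G.omega)) ∪
        G'.ed.image (fun p => (p.1 + G.omega, p.2 + G.omega))

/-- `s` encodes a strictly increasing sequence `a₁ < ⋯ < a_k` of elements of `H_f↑(G)`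
matched with pairwise distinct elements `b₁,…,b_k` of `H_f↓(G')`. -/
def Matching (G G' : BD) (s : Finset (ℕ × ℕ)) : Prop :=
  (∀ p ∈ s, p.1 ∈ G.HfUp ∧ p.2 ∈ G'.HfDn) ∧
  (∀ p ∈ s, ∀ q ∈ s, p.1 = q.1 → p = q) ∧
  (∀ p ∈ s, ∀ q ∈ s, p.2 = q.2 → p = q)

open scoped Classical in
noncomputable def matchings (G G' : BD) : Finset (Finset (ℕ × ℕ)) :=
  (G.HfUp ×ˢ G'.HfDn).powerset.filter (fun s => Matching G G' s)

/-- juxtaposition -/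
def juxt (G G' : BD) : BD := comp G G' ∅

def Indiv (G : BD) : Prop :=
  ∀ G₁ G₂ : BD, G₁.Valid → G₂.Valid → G = juxt G₁ G₂ → G₁ = G ∨ G₂ = G

/-- half-edges attached to the vertices in `I` -/
def HI (G : BD) (I : Finset ℕ) : Finset ℕ :=
  (Finset.Icc 1 G.omega).filter (fun k => G.v k ∈ I)

/-- the increasing relabelling bijection -/
def phi (G : BD) (I : Finset ℕ) (k : ℕ) : ℕ := ((G.HI I).filter (· ≤ k)).card

/-- sub-B-diagram on the set of vertices `I` -/
def sub (G : BD) (I : Finset ℕ) : BD where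
  lam := ((List.range G.lam.length).filter (fun i => i + 1 ∈ I)).map (fun i => G.lam.getD i 0)
  up := (G.up ∩ G.HI I).image (G.phi I)
  dn := (G.dn ∩ G.HI I).image (G.phi I)
  ed := (G.ed.filter (fun p => G.v p.1 ∈ I ∧ G.v p.2 ∈ I)).image
          (fun p => (G.phi I p.1, G.phi I p.2))

def Isolated (G : BD) (I : Finset ℕ) : Prop :=
  ∀ p ∈ G.ed, (G.v p.1 ∈ I ↔ G.v p.2 ∈ I)

def Connected (G : BD) : Prop :=
  ∀ i j : ℕ, 1 ≤ i → i < j → j ≤ G.nv →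
    ∃ (k : ℕ) (c : Fin (k + 1) → ℕ × ℕ),
      (∀ ℓ, c ℓ ∈ G.ed) ∧
      (i = G.v (c 0).1 ∨ i = G.v (c 0).2) ∧
      (j = G.v (c (Fin.last k)).1 ∨ j = G.v (c (Fin.last k)).2) ∧
      ∀ ℓ : Fin k,
        G.v (c ℓ.castSucc).1 = G.v (c ℓ.succ).1 ∨ G.v (c ℓ.castSucc).1 = G.v (c ℓ.succ).2 ∨
        G.v (c ℓ.castSucc).2 = G.v (c ℓ.succ).1 ∨ G.v (c ℓ.castSucc).2 = G.v (c ℓ.succ).2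

def IsConnComp (G : BD) (I : Finset ℕ) : Prop :=
  I ⊆ Finset.Icc 1 G.nv ∧ I.Nonempty ∧ (G.sub I).Connected ∧
  ∀ J : Finset ℕ, I ⊆ J → J ⊆ Finset.Icc 1 G.nv → (G.sub J).Connected → J = I

end BD

/-!
Cut the list of vertices after the first `m`. Half-edges are numbered vertex by vertex, so every
edge `(a, b)` satisfies `a < b`, and relative to the number `w` of half-edges before the cut exactly
one of `b ≤ w`, `a ≤ w < b` and `w < a` holds. These three cases are the edges of the first part,
the pairs along which the two parts are composed, and the edges of the second part. For `m = 1` the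
first part has no edges, as the vertex number increases strictly along an edge.
-/

namespace BD

section VertexNumber

variable {G G' : BD} {s : Finset (ℕ × ℕ)} {k : ℕ}

theorem v_eq_count (G : BD) (k : ℕ) :
    G.v k = Nat.count (fun i => (G.lam.take i).sum < k) G.nv := rfl

theorem v_mono (G : BD) : Monotone G.v := fun _ _ hab =>
  Nat.count_mono_left fun _ _ h => h.trans_le hab

theorem v_le_nv (G : BD) (k : ℕ) : G.v k ≤ G.nv := Nat.count_le _

theorem v_pos (hG : 0 < G.nv) (hk : 0 < k) : 0 < G.v k :=
  Nat.pos_of_ne_zero (Nat.count_ne_iff_exists.2 ⟨0, hG, hk⟩)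

theorem v_of_omega_lt (hk : G.omega < k) : G.v k = G.nv :=
  Nat.count_of_forall fun i _ =>
    ((List.take_sublist i G.lam).sum_le_sum fun _ _ => Nat.zero_le _).trans_lt hk

theorem v_comp (G G' : BD) (s : Finset (ℕ × ℕ)) (k : ℕ) :
    (comp G G' s).v k =
      G.v k + Nat.count (fun i => G.omega + (G'.lam.take i).sum < k) G'.nv := by
  have hnv : (comp G G' s).nv = G.nv + G'.nv := List.length_append
  rw [v_eq_count, hnv, Nat.count_add]
  congr 1
  · have htake : ∀ i < G.nv, (comp G G' s).lam.take i = G.lam.take i := fun i hi =>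
      List.take_append_of_le_length hi.le
    exact le_antisymm (Nat.count_mono_left fun i hi h => by rwa [← htake i hi])
      (Nat.count_mono_left fun i hi h => by rwa [htake i hi])
  · have hsum : ∀ i, ((comp G G' s).lam.take (G.nv + i)).sum = G.omega + (G'.lam.take i).sum :=
      fun i => (congrArg List.sum (List.take_length_add_append i)).trans List.sum_append
    simp only [hsum]

theorem v_comp_of_le_omega (hk : k ≤ G.omega) : (comp G G' s).v k = G.v k := by
  rw [v_comp, Nat.add_eq_left, Nat.count_iff_forall_not]
  omega

theorem v_comp_add_omega (hk : 0 < k) : (comp G G' s).v (k + G.omega) = G.nv + G'.v k := by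
  rw [v_comp, v_of_omega_lt (Nat.lt_add_of_pos_left hk), v_eq_count G']
  simp only [add_comm k, Nat.add_lt_add_iff_left]

end VertexNumber

section ShiftDown

variable {t : Finset ℕ} {w x n : ℕ}

/-- The elements of `t` above `w`, each decreased by `w`: the numbering, inside the second of two
composed B-diagrams, of the half-edges in `t` that lie in it. Without the filter an element `w` of
`t` would give the non-half-edge `0`. -/
noncomputable def shiftDown (t : Finset ℕ) (w : ℕ) : Finset ℕ :=
  (t.filter (w < ·)).preimage (· + w) (add_left_injective w).injOn

theorem mem_shiftDown : x ∈ shiftDown t w ↔ x + w ∈ t ∧ 0 < x := by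
  simp [shiftDown]

theorem shiftDown_subset_Icc (ht : t ⊆ Finset.Icc 1 (w + n)) : shiftDown t w ⊆ Finset.Icc 1 n := by
  intro x hx
  obtain ⟨hxt, hx⟩ := mem_shiftDown.1 hx
  have hxn : x + w ≤ w + n := (Finset.mem_Icc.1 (ht hxt)).2
  exact Finset.mem_Icc.2 ⟨hx, by omega⟩

theorem filter_le_union_image_shiftDown (t : Finset ℕ) (w : ℕ) :
    t.filter (· ≤ w) ∪ (shiftDown t w).image (· + w) = t := by
  have himage : (shiftDown t w).image (· + w) = t.filter (w < ·) := by
    classical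
    rw [shiftDown, Finset.image_preimage, Finset.filter_true_of_mem]
    exact fun x hx => ⟨x - w, Nat.sub_add_cancel (Finset.mem_filter.1 hx).2.le⟩
  rw [himage, ← Finset.filter_or, Finset.filter_true_of_mem fun x _ => le_or_gt x w]

end ShiftDown

section Cut

variable {G : BD} {m a b : ℕ}

/-- The number of half-edges attached to the first `m` vertices. -/
def omegaTake (G : BD) (m : ℕ) : ℕ := (G.lam.take m).sum

/-- The B-diagram on the first `m` vertices of `G`, with the edges of `G` between them. Testing only
the second component of an edge suffices because edges of a valid B-diagram are increasing. -/
def take (G : BD) (m : ℕ) : BD where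
  lam := G.lam.take m
  up := G.up.filter (· ≤ G.omegaTake m)
  dn := G.dn.filter (· ≤ G.omegaTake m)
  ed := G.ed.filter (·.2 ≤ G.omegaTake m)

/-- The B-diagram on the vertices of `G` after the first `m`, with the edges of `G` between them.
Testing only the first component of an edge suffices because edges of a valid B-diagram are
increasing. -/
noncomputable def drop (G : BD) (m : ℕ) : BD where
  lam := G.lam.drop m
  up := shiftDown G.up (G.omegaTake m)
  dn := shiftDown G.dn (G.omegaTake m)
  ed := (G.ed.filter (G.omegaTake m < ·.1)).preimage
    (Prod.map (· + G.omegaTake m) (· + G.omegaTake m))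
    ((add_left_injective _).prodMap (add_left_injective _)).injOn

/-- The edges of `G` from the first `m` vertices to the others, as pairs of a half-edge of
`G.take m` and a half-edge of `G.drop m`. -/
noncomputable def cut (G : BD) (m : ℕ) : Finset (ℕ × ℕ) :=
  (G.ed.filter fun p => p.1 ≤ G.omegaTake m ∧ G.omegaTake m < p.2).preimage
    (Prod.map id (· + G.omegaTake m))
    (Function.injective_id.prodMap (add_left_injective _)).injOn

theorem omegaTake_add_omega_drop (G : BD) (m : ℕ) : G.omegaTake m + (G.drop m).omega = G.omega :=
  List.sum_take_add_sum_drop G.lam m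

theorem mem_ed_take : (a, b) ∈ (G.take m).ed ↔ (a, b) ∈ G.ed ∧ b ≤ G.omegaTake m :=
  Finset.mem_filter

theorem mem_ed_drop :
    (a, b) ∈ (G.drop m).ed ↔ (a + G.omegaTake m, b + G.omegaTake m) ∈ G.ed ∧ 0 < a := by
  simp [drop]

theorem mem_cut :
    (a, b) ∈ G.cut m ↔ (a, b + G.omegaTake m) ∈ G.ed ∧ a ≤ G.omegaTake m ∧ 0 < b := by
  simp [cut]

end Cut

theorem mem_ed_comp {G G' : BD} {s : Finset (ℕ × ℕ)} {a b : ℕ} :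
    (a, b) ∈ (comp G G' s).ed ↔
      (a, b) ∈ G.ed ∨ (∃ b', (a, b') ∈ s ∧ b' + G.omega = b) ∨
        ∃ a' b', (a', b') ∈ G'.ed ∧ a' + G.omega = a ∧ b' + G.omega = b := by
  simp [comp]

namespace Valid

variable {G : BD} {m a b c : ℕ}

theorem fst_mem_up (hG : G.Valid) (h : (a, b) ∈ G.ed) : a ∈ G.up := (hG.2.2.2.1 _ h).1

theorem snd_mem_dn (hG : G.Valid) (h : (a, b) ∈ G.ed) : b ∈ G.dn := (hG.2.2.2.1 _ h).2.1

theorem v_fst_lt_v_snd (hG : G.Valid) (h : (a, b) ∈ G.ed) : G.v a < G.v b := (hG.2.2.2.1 _ h).2.2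

theorem fst_lt_snd (hG : G.Valid) (h : (a, b) ∈ G.ed) : a < b :=
  G.v_mono.reflect_lt (hG.v_fst_lt_v_snd h)

theorem snd_unique (hG : G.Valid) (h : (a, b) ∈ G.ed) (h' : (a, c) ∈ G.ed) : b = c :=
  congrArg Prod.snd (hG.2.2.2.2.1 _ h _ h' rfl)

theorem fst_unique (hG : G.Valid) (h : (a, c) ∈ G.ed) (h' : (b, c) ∈ G.ed) : a = b :=
  congrArg Prod.fst (hG.2.2.2.2.2 _ h _ h' rfl)

theorem ed_eq_empty_of_nv_le_one (hG : G.Valid) (hn : G.nv ≤ 1) : G.ed = ∅ := by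
  refine Finset.eq_empty_of_forall_notMem fun ⟨a, b⟩ h => ?_
  have hlt : G.v a < G.v b := hG.v_fst_lt_v_snd h
  have hb : G.v b ≤ G.nv := G.v_le_nv b
  have ha : 0 < G.v a := v_pos (by omega) (Finset.mem_Icc.1 (hG.2.1 (hG.fst_mem_up h))).1
  omega

theorem ed_comp_take_drop (hG : G.Valid) (m : ℕ) :
    (comp (G.take m) (G.drop m) (G.cut m)).ed = G.ed := by
  have homega : (G.take m).omega = G.omegaTake m := rfl
  ext ⟨a, b⟩
  rw [mem_ed_comp, homega]
  constructor
  · rintro (h | ⟨b, h, rfl⟩ | ⟨a, b, h, rfl, rfl⟩)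
    · exact (mem_ed_take.1 h).1
    · exact (mem_cut.1 h).1
    · exact (mem_ed_drop.1 h).1
  · intro h
    have hab : a < b := hG.fst_lt_snd h
    rcases le_or_gt b (G.omegaTake m) with hb | hb
    · exact .inl (mem_ed_take.2 ⟨h, hb⟩)
    obtain ⟨b, rfl⟩ := Nat.exists_eq_add_of_le' hb.le
    rcases le_or_gt a (G.omegaTake m) with ha | ha
    · exact .inr (.inl ⟨b, mem_cut.2 ⟨h, ha, by omega⟩, rfl⟩)
    obtain ⟨a, rfl⟩ := Nat.exists_eq_add_of_le' ha.le
    exact .inr (.inr ⟨a, b, mem_ed_drop.2 ⟨h, by omega⟩, rfl, rfl⟩)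

theorem comp_take_drop (hG : G.Valid) (m : ℕ) : comp (G.take m) (G.drop m) (G.cut m) = G := by
  have hlam : (comp (G.take m) (G.drop m) (G.cut m)).lam = G.lam := List.take_append_drop m G.lam
  have hup : (comp (G.take m) (G.drop m) (G.cut m)).up = G.up :=
    filter_le_union_image_shiftDown G.up (G.omegaTake m)
  have hdn : (comp (G.take m) (G.drop m) (G.cut m)).dn = G.dn :=
    filter_le_union_image_shiftDown G.dn (G.omegaTake m)
  exact (mk.injEq ..).mpr ⟨hlam, hup, hdn, hG.ed_comp_take_drop m⟩

theorem v_take (hG : G.Valid) (ha : a ≤ G.omegaTake m) : (G.take m).v a = G.v a :=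
  (v_comp_of_le_omega ha).symm.trans (congrArg (v · _) (hG.comp_take_drop m))

theorem v_drop (hG : G.Valid) (ha : 0 < a) :
    (G.take m).nv + (G.drop m).v a = G.v (a + G.omegaTake m) :=
  (v_comp_add_omega ha).symm.trans (congrArg (v · _) (hG.comp_take_drop m))

theorem take (hG : G.Valid) (m : ℕ) : (G.take m).Valid := by
  have hle : ∀ t ⊆ Finset.Icc 1 G.omega,
      t.filter (· ≤ G.omegaTake m) ⊆ Finset.Icc 1 (G.take m).omega := fun t ht x hx =>
    have ⟨hx, hxm⟩ := Finset.mem_filter.1 hx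
    Finset.mem_Icc.2 ⟨(Finset.mem_Icc.1 (ht hx)).1, hxm⟩
  have hed : (G.take m).ed ⊆ G.ed := Finset.filter_subset _ _
  refine ⟨fun x hx => hG.1 x (List.mem_of_mem_take hx), hle _ hG.2.1, hle _ hG.2.2.1, ?_,
    fun p hp q hq => hG.2.2.2.2.1 p (hed hp) q (hed hq),
    fun p hp q hq => hG.2.2.2.2.2 p (hed hp) q (hed hq)⟩
  rintro ⟨a, b⟩ h
  obtain ⟨h, hb⟩ := mem_ed_take.1 h
  have ha : a ≤ G.omegaTake m := (hG.fst_lt_snd h).le.trans hb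
  rw [hG.v_take ha, hG.v_take hb]
  exact ⟨Finset.mem_filter.2 ⟨hG.fst_mem_up h, ha⟩, Finset.mem_filter.2 ⟨hG.snd_mem_dn h, hb⟩,
    hG.v_fst_lt_v_snd h⟩

theorem drop (hG : G.Valid) (m : ℕ) : (G.drop m).Valid := by
  have hup := hG.2.1
  have hdn := hG.2.2.1
  rw [← G.omegaTake_add_omega_drop m] at hup hdn
  refine ⟨fun x hx => hG.1 x (List.mem_of_mem_drop hx), shiftDown_subset_Icc hup,
    shiftDown_subset_Icc hdn, ?_, ?_, ?_⟩
  · rintro ⟨a, b⟩ h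
    obtain ⟨h, ha⟩ := mem_ed_drop.1 h
    have hb : 0 < b := ha.trans (Nat.lt_of_add_lt_add_right (hG.fst_lt_snd h))
    have hv := hG.v_fst_lt_v_snd h
    rw [← hG.v_drop ha, ← hG.v_drop hb] at hv
    exact ⟨mem_shiftDown.2 ⟨hG.fst_mem_up h, ha⟩, mem_shiftDown.2 ⟨hG.snd_mem_dn h, hb⟩,
      Nat.lt_of_add_lt_add_left hv⟩
  · rintro ⟨a, b⟩ h ⟨_, c⟩ h' rfl
    rw [Nat.add_right_cancel (hG.snd_unique (mem_ed_drop.1 h).1 (mem_ed_drop.1 h').1)]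
  · rintro ⟨a, c⟩ h ⟨b, _⟩ h' rfl
    rw [Nat.add_right_cancel (hG.fst_unique (mem_ed_drop.1 h).1 (mem_ed_drop.1 h').1)]

theorem matching_cut (hG : G.Valid) (m : ℕ) : Matching (G.take m) (G.drop m) (G.cut m) := by
  refine ⟨?_, ?_, ?_⟩
  · rintro ⟨a, b⟩ h
    obtain ⟨h, ha, hb⟩ := mem_cut.1 h
    simp only [HfUp, HfDn, Finset.mem_sdiff, Finset.mem_image, Prod.exists, exists_and_right,
      exists_eq_right, not_exists]
    refine ⟨⟨Finset.mem_filter.2 ⟨hG.fst_mem_up h, ha⟩, fun c h' => ?_⟩,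
      mem_shiftDown.2 ⟨hG.snd_mem_dn h, hb⟩, fun c h' => ?_⟩
    · obtain ⟨h', hc⟩ := mem_ed_take.1 h'
      have hcb : c = b + G.omegaTake m := hG.snd_unique h' h
      omega
    · obtain ⟨h', hc⟩ := mem_ed_drop.1 h'
      have hca : c + G.omegaTake m = a := hG.fst_unique h' h
      omega
  · rintro ⟨a, b⟩ h ⟨_, c⟩ h' rfl
    rw [Nat.add_right_cancel (hG.snd_unique (mem_cut.1 h).1 (mem_cut.1 h').1)]
  · rintro ⟨a, c⟩ h ⟨b, _⟩ h' rfl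
    rw [hG.fst_unique (mem_cut.1 h).1 (mem_cut.1 h').1]

end Valid

end BD

theorem exists_comp_over_one_vertex_general {G : BD} (hG : G.Valid) {m : ℕ} (hm : m ≤ G.nv) :
    ∃ (V G' : BD) (s : Finset (ℕ × ℕ)),
      V.Valid ∧ G'.Valid ∧ V.nv = m ∧ G'.nv = G.nv - m ∧ BD.Matching V G' s ∧ G = BD.comp V G' s :=
  ⟨G.take m, G.drop m, G.cut m, hG.take m, hG.drop m, List.length_take_of_le hm, List.length_drop,
    hG.matching_cut m, (hG.comp_take_drop m).symm⟩

/-- every B-diagram with at least one vertex is a composition of a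
B-diagram `G'` with `n-1` vertices over a one-vertex B-diagram `V` (with no edges)
along some admissible matching. -/
theorem exists_comp_over_one_vertex (G : BD) (hG : G.Valid) (hn : 1 ≤ G.nv) :
    ∃ (V G' : BD) (s : Finset (ℕ × ℕ)),
      V.Valid ∧ G'.Valid ∧ V.nv = 1 ∧ V.ed = ∅ ∧ G'.nv = G.nv - 1 ∧
      BD.Matching V G' s ∧ G = BD.comp V G' s := by
  obtain ⟨V, G', s, hV, hG', hnV, hnG', hs, hcomp⟩ := exists_comp_over_one_vertex_general hG hn
  exact ⟨V, G', s, hV, hG', hnV, hV.ed_eq_empty_of_nv_le_one hnV.le, hnG', hs, hcomp⟩
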